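/- Let α ∈ (0,1] and let μ be a (1/α)-entropically independent probability distribution on binom([n],k) with marginals p_i, and let ℓ be an integer with 1 ≤ ℓ ≤ k/2. Then ∑_{S∈binom([n],ℓ)} μ_ℓ(S) · log( μ_ℓ(S) / (ℓ!·∏_{i∈S}(p_i/k)) ) ≤ (ℓ²/k)·((1/α)·log(2n/k) + 1), where μ_ℓ = μD_{k→ℓ} and summands with μ_ℓ(S) = 0 are interpreted as 0. -/

import Mathlib

open Finset

/-!
Draw `S ∼ μ` and reveal its elements one at a time in uniformly random order; the first `ℓ` of them
form a sample of `μ_ℓ`, so `DKL(μ_ℓ‖μ'_ℓ)` is accumulated element by element. If `T` is the set of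
the first `i` revealed elements, entropic independence, tested on `μ` conditioned on containing `T`,
bounds the expected log-likelihood ratio of the next one against `p/k` in terms of
`-log P[T ⊆ S]`, whose mean is the entropy of `μ_i` minus `log (k.choose i)`, hence at most
`i * log (2n/k)`. The elements of `T` itself only help this bound. Leaving them out renormalizes
the law of the next element by `k / (k - i)`, whose logarithm is at most `i / (k - i)`. Altogether
the `(i+1)`-st element contributes at most `i / (k - i) * (1/α * log (2n/k) + 1)`, and
`i / (k - i) ≤ (2i + 1)/k` sums to `ℓ²/k`.
-/

section RealInequalities

variable {k : ℕ}

theorem sum_negMulLog_le_log_card {X : Type*} {s : Finset X} {q : X → ℝ}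
    (hq : ∀ x ∈ s, 0 ≤ q x) (hsum : ∑ x ∈ s, q x = 1) :
    ∑ x ∈ s, Real.negMulLog (q x) ≤ Real.log #s := by
  have hs : (0 : ℝ) < #s := by
    rw [Nat.cast_pos, card_pos]
    exact nonempty_of_sum_ne_zero (hsum.trans_ne one_ne_zero)
  have jensen := Real.concaveOn_negMulLog.le_map_sum (t := s) (w := fun _ => (#s : ℝ)⁻¹) (p := q)
    (fun _ _ => by positivity) (by simp [hs.ne']) hq
  simp only [smul_eq_mul, ← mul_sum, hsum, mul_one, Real.negMulLog, Real.log_inv] at jensen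
  rw [neg_mul_neg] at jensen
  exact le_of_mul_le_mul_left jensen (inv_pos.2 hs)

theorem choose_div_choose_le_pow {n i : ℕ} (hk : 0 < k) (hi : 2 * i ≤ k) :
    (n.choose i / k.choose i : ℝ) ≤ (2 * n / k) ^ i := by
  have hlower : ((k : ℝ) / 2) ^ i / i.factorial ≤ k.choose i := by
    refine le_trans ?_ (Nat.pow_le_choose i k)
    gcongr
    rw [div_le_iff₀ two_pos]
    exact_mod_cast (by lia : k ≤ (k + 1 - i) * 2)
  calc (n.choose i / k.choose i : ℝ)
      ≤ (n ^ i / i.factorial) / ((k / 2) ^ i / i.factorial) := by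
        gcongr
        exact Nat.choose_le_pow_div i n
    _ = (2 * n / k) ^ i := by
        rw [div_div_div_cancel_right₀ (by positivity), ← div_pow, div_div_eq_mul_div, mul_comm]

theorem log_descFactorial_succ {i : ℕ} (hi : i < k) :
    Real.log (k.descFactorial (i + 1)) = Real.log (k - i) + Real.log (k.descFactorial i) := by
  have hpos : (0 : ℝ) < k - i := sub_pos.2 (by exact_mod_cast hi)
  rw [Nat.descFactorial_succ, Nat.cast_mul, Nat.cast_sub hi.le, Real.log_mul hpos.ne']
  exact_mod_cast (Nat.descFactorial_pos.2 hi.le).ne'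

theorem log_sub_log_sub_le {x y : ℝ} (hx : 0 < x) (hyx : y < x) :
    Real.log x - Real.log (x - y) ≤ y / (x - y) := by
  have hpos : 0 < x - y := sub_pos.2 hyx
  calc Real.log x - Real.log (x - y) = Real.log (x / (x - y)) :=
        (Real.log_div hx.ne' hpos.ne').symm
    _ ≤ x / (x - y) - 1 := Real.log_le_sub_one_of_pos (div_pos hx hpos)
    _ = y / (x - y) := by rw [div_sub_one hpos.ne', sub_sub_cancel]

theorem le_sq_div_mul_of_sub_le {a : ℕ → ℝ} {c : ℝ} (hc : 0 ≤ c) (h0 : a 0 ≤ 0)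
    (hstep : ∀ i, 2 * (i + 1) ≤ k → a (i + 1) - a i ≤ i / (k - i) * c)
    {ℓ : ℕ} (hℓ : 2 * ℓ ≤ k) : a ℓ ≤ ℓ ^ 2 / k * c := by
  induction ℓ with
  | zero => simpa using h0
  | succ i ih =>
    have hk : (0 : ℝ) < k := by exact_mod_cast (by lia : 0 < k)
    have hik : (2 * i : ℝ) ≤ k := by exact_mod_cast (by lia : 2 * i ≤ k)
    have hratio : (i : ℝ) / (k - i) ≤ (2 * i + 1) / k := by
      rw [div_le_div_iff₀ (by linarith) hk]
      nlinarith [(Nat.cast_nonneg i : (0 : ℝ) ≤ i)]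
    calc a (i + 1) ≤ i / (k - i) * c + a i := sub_le_iff_le_add.1 (hstep i hℓ)
      _ ≤ (2 * i + 1) / k * c + i ^ 2 / k * c := by
        gcongr
        exact ih (by lia)
      _ = (i + 1 : ℕ) ^ 2 / k * c := by
        push_cast
        ring

end RealInequalities

section Definitions

variable {ι : Type*} [Fintype ι]

/-- The discrete Kullback–Leibler divergence `DKL(q‖p)` of weight functions on a finite set. It is
the usual one only when `q x = 0` wherever `p x = 0`: other summands, which should be `∞`, are `0`
because of `x / 0 = 0`. -/
noncomputable def klSum {X : Type*} (s : Finset X) (q p : X → ℝ) : ℝ :=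
  ∑ x ∈ s, q x * Real.log (q x / p x)

/-- Probability distributions on the `k`-element subsets of `ι`, encoded as weight functions on all
finite subsets that vanish off those of size `k`. -/
structure IsSubsetDistribution (μ : Finset ι → ℝ) (k : ℕ) : Prop where
  nonneg : ∀ S, 0 ≤ μ S
  card_eq : ∀ S, μ S ≠ 0 → #S = k
  sum_eq_one : ∑ S, μ S = 1

variable [DecidableEq ι]

/-- The marginal `P[i ∈ S]` of a random set `S ∼ μ`. -/
noncomputable def marginal (μ : Finset ι → ℝ) (i : ι) : ℝ :=
  ∑ S with i ∈ S, μ S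

/-- The probability `P[T ⊆ S]` that a random set `S ∼ μ` contains `T`. -/
noncomputable def inclusionProb (μ : Finset ι → ℝ) (T : Finset ι) : ℝ :=
  ∑ S with T ⊆ S, μ S

/-- The distribution `μD_{k→ℓ}` of a uniformly random `ℓ`-subset of `S ∼ μ`. The formula is
meaningful only at sets of size `ℓ`, so sums over it are restricted to those. -/
noncomputable def down (μ : Finset ι → ℝ) (k ℓ : ℕ) (T : Finset ι) : ℝ :=
  (k.choose ℓ : ℝ)⁻¹ * inclusionProb μ T

/-- The probability that `ℓ` i.i.d. draws from the normalized marginal distribution `p / k` are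
distinct and form the set `S`, for `S` of size `ℓ`. -/
noncomputable def iidProposal (p : ι → ℝ) (k ℓ : ℕ) (S : Finset ι) : ℝ :=
  ℓ.factorial * ∏ i ∈ S, p i / k

/-- `(1/α)`-entropic independence of a distribution `μ` on `k`-subsets. Only `ν` absolutely
continuous with respect to `μ` are tested, since otherwise `DKL(ν‖μ) = ∞`. -/
def IsEntropicallyIndependent (α : ℝ) (μ : Finset ι → ℝ) (k : ℕ) : Prop :=
  ∀ ν : Finset ι → ℝ, IsSubsetDistribution ν k → (∀ S, μ S = 0 → ν S = 0) →
    klSum univ (fun i => marginal ν i / k) (fun i => marginal μ i / k) ≤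
      1 / (α * k) * klSum univ ν μ

/-- The distribution of `S ∼ μ` conditioned on `T ⊆ S`. -/
noncomputable def conditionOn (μ : Finset ι → ℝ) (T S : Finset ι) : ℝ :=
  if T ⊆ S then μ S / inclusionProb μ T else 0

/-- The pointwise total correlation `log (P[T ⊆ S] / ∏ i ∈ T, P[i ∈ S])` of the events `i ∈ S`,
`i ∈ T`. It is written as a difference so that adding an element to `T` changes it by an explicit
amount even when some of the probabilities vanish. -/
noncomputable def specificCorrelation (μ : Finset ι → ℝ) (T : Finset ι) : ℝ :=
  Real.log (inclusionProb μ T) - ∑ i ∈ T, Real.log (marginal μ i)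

end Definitions

variable {ι : Type*} [Fintype ι] {μ : Finset ι → ℝ} {k i : ℕ}

theorem IsSubsetDistribution.le_card (hμ : IsSubsetDistribution μ k) : k ≤ Fintype.card ι := by
  obtain ⟨S, -, hS⟩ := exists_ne_zero_of_sum_ne_zero (hμ.sum_eq_one.trans_ne one_ne_zero)
  exact hμ.card_eq S hS ▸ card_le_univ S

variable [DecidableEq ι]

section InclusionProb

theorem inclusionProb_empty (μ : Finset ι → ℝ) : inclusionProb μ ∅ = ∑ S, μ S := by
  simp [inclusionProb]

theorem inclusionProb_singleton (μ : Finset ι → ℝ) (i : ι) :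
    inclusionProb μ {i} = marginal μ i := by
  simp [inclusionProb, marginal]

theorem inclusionProb_nonneg (hμ : ∀ S, 0 ≤ μ S) (T : Finset ι) : 0 ≤ inclusionProb μ T :=
  sum_nonneg fun S _ => hμ S

theorem inclusionProb_anti (hμ : ∀ S, 0 ≤ μ S) : Antitone (inclusionProb μ) := fun _ _ hTU =>
  sum_le_sum_of_subset_of_nonneg (monotone_filter_right _ fun _ _ => hTU.trans) fun S _ _ => hμ S

theorem inclusionProb_le_marginal (hμ : ∀ S, 0 ≤ μ S) {T : Finset ι} {i : ι} (hi : i ∈ T) :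
    inclusionProb μ T ≤ marginal μ i :=
  inclusionProb_singleton μ i ▸ inclusionProb_anti hμ (singleton_subset_iff.2 hi)

theorem marginal_nonneg (hμ : ∀ S, 0 ≤ μ S) (i : ι) : 0 ≤ marginal μ i :=
  sum_nonneg fun S _ => hμ S

theorem IsSubsetDistribution.marginal_le_one (hμ : IsSubsetDistribution μ k) (i : ι) :
    marginal μ i ≤ 1 := by
  rw [← hμ.sum_eq_one, ← inclusionProb_empty, ← inclusionProb_singleton]
  exact inclusionProb_anti hμ.nonneg (empty_subset _)

theorem inclusionProb_insert (μ : Finset ι → ℝ) (T : Finset ι) (j : ι) :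
    inclusionProb μ (insert j T) = ∑ S with T ⊆ S, if j ∈ S then μ S else 0 := by
  rw [← sum_filter, filter_filter]
  simp only [inclusionProb, insert_subset_iff, and_comm]

theorem sum_compl_inclusionProb_insert (hcard : ∀ S, μ S ≠ 0 → #S = k) (T : Finset ι) :
    ∑ j ∈ Tᶜ, inclusionProb μ (insert j T) = (k - #T) * inclusionProb μ T := by
  simp only [inclusionProb_insert]
  rw [sum_comm, inclusionProb, mul_sum]
  refine sum_congr rfl fun S hS => ?_
  have hTS : T ⊆ S := (mem_filter.1 hS).2
  rw [sum_ite_mem, inter_comm, ← sdiff_eq_inter_compl, sum_const, nsmul_eq_mul,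
    cast_card_sdiff hTS]
  by_cases h : μ S = 0
  · simp [h]
  · rw [hcard S h]

end InclusionProb

section Down

theorem sum_card_eq_sum_compl_insert (i : ℕ) (f : Finset ι → ℝ) :
    ∑ T with #T = i, ∑ j ∈ Tᶜ, f (insert j T) = (i + 1) * ∑ U with #U = i + 1, f U := by
  have hmul : (i + 1) * ∑ U with #U = i + 1, f U = ∑ U with #U = i + 1, ∑ _j ∈ U, f U := by
    rw [mul_sum]
    refine sum_congr rfl fun U hU => ?_
    rw [sum_const, (mem_filter.1 hU).2, nsmul_eq_mul, Nat.cast_succ]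
  rw [hmul, sum_sigma', sum_sigma']
  refine sum_bij' (fun x _ => ⟨insert x.2 x.1, x.2⟩) (fun x _ => ⟨x.1.erase x.2, x.2⟩)
    ?_ ?_ ?_ ?_ fun _ _ => rfl
  all_goals
    rintro ⟨T, j⟩ h
    simp only [mem_sigma, mem_filter, mem_univ, true_and, mem_compl] at h
    simp_all

theorem down_nonneg (hμ : ∀ S, 0 ≤ μ S) (k ℓ : ℕ) (T : Finset ι) : 0 ≤ down μ k ℓ T :=
  mul_nonneg (by positivity) (inclusionProb_nonneg hμ T)

/-- A sample of `μ_{i+1}` is a sample `T` of `μ_i` together with a uniformly random further element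
of the underlying `k`-set. -/
theorem sum_down_succ_sub (hcard : ∀ S, μ S ≠ 0 → #S = k) (hi : i < k) (f : Finset ι → ℝ) :
    (k - i) * (∑ U with #U = i + 1, down μ k (i + 1) U * f U -
        ∑ T with #T = i, down μ k i T * f T) =
      (k.choose i : ℝ)⁻¹ * ∑ T with #T = i, ∑ j ∈ Tᶜ,
        inclusionProb μ (insert j T) * (f (insert j T) - f T) := by
  have hchoose : (k - i : ℝ) * (k.choose (i + 1) : ℝ)⁻¹ = (k.choose i : ℝ)⁻¹ * (i + 1) := by
    have h0 : (k.choose i : ℝ) ≠ 0 := by exact_mod_cast (Nat.choose_pos hi.le).ne'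
    have h1 : (k.choose (i + 1) : ℝ) ≠ 0 := by exact_mod_cast (Nat.choose_pos hi).ne'
    have := congrArg (Nat.cast (R := ℝ)) (Nat.choose_succ_right_eq k i)
    push_cast [hi.le] at this
    field_simp
    linarith
  have hold : ∀ T ∈ ({T | #T = i} : Finset (Finset ι)),
      ∑ j ∈ Tᶜ, inclusionProb μ (insert j T) * f T = (k - i) * (inclusionProb μ T * f T) := by
    intro T hT
    rw [← sum_mul, sum_compl_inclusionProb_insert hcard, (mem_filter.1 hT).2, mul_assoc]
  simp only [mul_sub, sum_sub_distrib, down, mul_assoc, ← mul_sum]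
  rw [sum_card_eq_sum_compl_insert i fun U => inclusionProb μ U * f U, sum_congr rfl hold,
    ← mul_sum, ← mul_assoc, hchoose]
  ring

theorem IsSubsetDistribution.sum_down (hμ : IsSubsetDistribution μ k) (hi : i ≤ k) :
    ∑ T with #T = i, down μ k i T = 1 := by
  induction i with
  | zero => simp [down, filter_eq', inclusionProb_empty, hμ.sum_eq_one]
  | succ i ih =>
    have hki : (k - i : ℝ) ≠ 0 := sub_ne_zero.2 (by exact_mod_cast (Nat.lt_of_succ_le hi).ne')
    have hstep := sum_down_succ_sub hμ.card_eq hi fun _ => 1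
    simp only [mul_one, sub_self, mul_zero, sum_const_zero, mul_eq_zero, hki, false_or] at hstep
    rw [sub_eq_zero.1 hstep, ih (by lia)]

theorem IsSubsetDistribution.sum_negMulLog_inclusionProb_le (hμ : IsSubsetDistribution μ k)
    (hk : 0 < k) (hi : 2 * i ≤ k) :
    (k.choose i : ℝ)⁻¹ * ∑ T with #T = i, Real.negMulLog (inclusionProb μ T) ≤
      i * Real.log (2 * Fintype.card ι / k) := by
  have hC : (0 : ℝ) < k.choose i := by exact_mod_cast Nat.choose_pos (by lia)
  have hN : (0 : ℝ) < (Fintype.card ι).choose i := by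
    exact_mod_cast Nat.choose_pos ((by lia : i ≤ k).trans hμ.le_card)
  have hterm (T : Finset ι) : (k.choose i : ℝ)⁻¹ * Real.negMulLog (inclusionProb μ T) =
      Real.negMulLog (down μ k i T) - down μ k i T * Real.log (k.choose i) := by
    rw [down, Real.negMulLog_mul]
    simp only [Real.negMulLog, Real.log_inv]
    ring
  have hentropy := sum_negMulLog_le_log_card (s := {T | #T = i})
    (fun T _ => down_nonneg hμ.nonneg k i T) (hμ.sum_down (by lia))
  rw [univ_filter_card_eq, card_powersetCard, card_univ, ← univ_filter_card_eq] at hentropy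
  calc (k.choose i : ℝ)⁻¹ * ∑ T with #T = i, Real.negMulLog (inclusionProb μ T)
      = ∑ T with #T = i, Real.negMulLog (down μ k i T) - Real.log (k.choose i) := by
        simp only [mul_sum, hterm]
        rw [sum_sub_distrib, ← sum_mul, hμ.sum_down (by lia), one_mul]
    _ ≤ Real.log ((Fintype.card ι).choose i) - Real.log (k.choose i) := by gcongr
    _ = Real.log ((Fintype.card ι).choose i / k.choose i) := (Real.log_div hN.ne' hC.ne').symm
    _ ≤ Real.log ((2 * Fintype.card ι / k) ^ i) :=
        Real.log_le_log (by positivity) (choose_div_choose_le_pow hk hi)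
    _ = i * Real.log (2 * Fintype.card ι / k) := Real.log_pow _ _

end Down

section ConditionOn

theorem isSubsetDistribution_conditionOn (hμ : IsSubsetDistribution μ k) {T : Finset ι}
    (hT : inclusionProb μ T ≠ 0) : IsSubsetDistribution (conditionOn μ T) k where
  nonneg S := by
    unfold conditionOn
    split_ifs
    exacts [div_nonneg (hμ.nonneg S) (inclusionProb_nonneg hμ.nonneg T), le_rfl]
  card_eq S hS := hμ.card_eq S fun h => hS (by simp [conditionOn, h])
  sum_eq_one := by
    simp only [conditionOn]
    rw [← sum_filter, ← sum_div]
    exact div_self hT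

theorem marginal_conditionOn (μ : Finset ι → ℝ) (T : Finset ι) (j : ι) :
    marginal (conditionOn μ T) j = inclusionProb μ (insert j T) / inclusionProb μ T := by
  simp only [marginal, conditionOn]
  rw [← sum_filter, filter_filter, ← sum_div]
  simp only [inclusionProb, insert_subset_iff]

theorem klSum_conditionOn (hμ : IsSubsetDistribution μ k) {T : Finset ι}
    (hT : inclusionProb μ T ≠ 0) :
    klSum univ (conditionOn μ T) μ = -Real.log (inclusionProb μ T) := by
  have hterm (S : Finset ι) : conditionOn μ T S * Real.log (conditionOn μ T S / μ S) =
      conditionOn μ T S * -Real.log (inclusionProb μ T) := by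
    by_cases hS : μ S = 0
    · simp [conditionOn, hS]
    by_cases hTS : T ⊆ S
    · simp only [conditionOn, hTS, if_true]
      rw [div_div_cancel_left' hS, Real.log_inv]
    · simp [conditionOn, hTS]
  simp only [klSum, hterm]
  rw [← sum_mul, (isSubsetDistribution_conditionOn hμ hT).sum_eq_one, one_mul]

theorem klSum_marginal_conditionOn (hμ : ∀ S, 0 ≤ μ S) (hk : k ≠ 0) {T : Finset ι}
    (hT : inclusionProb μ T ≠ 0) :
    klSum univ (fun j => marginal (conditionOn μ T) j / k) (fun j => marginal μ j / k) =
      (inclusionProb μ T * k)⁻¹ * ∑ j, inclusionProb μ (insert j T) *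
        (Real.log (inclusionProb μ (insert j T)) - Real.log (inclusionProb μ T) -
          Real.log (marginal μ j)) := by
  have hk' : (k : ℝ) ≠ 0 := by exact_mod_cast hk
  rw [klSum, mul_sum]
  refine sum_congr rfl fun j _ => ?_
  rw [marginal_conditionOn]
  rcases (inclusionProb_nonneg hμ (insert j T)).eq_or_lt with h | h
  · simp [← h]
  have hj : 0 < marginal μ j := h.trans_le (inclusionProb_le_marginal hμ (mem_insert_self j T))
  rw [div_div_div_cancel_right₀ hk', Real.log_div (div_ne_zero h.ne' hT) hj.ne',
    Real.log_div h.ne' hT]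
  field_simp

end ConditionOn

section SpecificCorrelation

theorem specificCorrelation_insert_sub (μ : Finset ι → ℝ) {T : Finset ι} {j : ι} (hj : j ∉ T) :
    specificCorrelation μ (insert j T) - specificCorrelation μ T =
      Real.log (inclusionProb μ (insert j T)) - Real.log (inclusionProb μ T) -
        Real.log (marginal μ j) := by
  rw [specificCorrelation, specificCorrelation, sum_insert hj]
  ring

/-- The right-hand side adds the terms `j ∈ T`, which are `P[T ⊆ S] * -log P[j ∈ S] ≥ 0`. -/
theorem IsSubsetDistribution.sum_compl_specificCorrelation_le_sum (hμ : IsSubsetDistribution μ k)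
    (T : Finset ι) :
    ∑ j ∈ Tᶜ, inclusionProb μ (insert j T) *
        (specificCorrelation μ (insert j T) - specificCorrelation μ T) ≤
      ∑ j, inclusionProb μ (insert j T) * (Real.log (inclusionProb μ (insert j T)) -
        Real.log (inclusionProb μ T) - Real.log (marginal μ j)) := by
  rw [sum_congr rfl fun j hj => by rw [specificCorrelation_insert_sub μ (mem_compl.1 hj)]]
  refine sum_le_sum_of_subset_of_nonneg (subset_univ _) fun j _ hj => ?_
  rw [insert_eq_of_mem (by simpa using hj), sub_self, zero_sub]
  exact mul_nonneg (inclusionProb_nonneg hμ.nonneg T) (neg_nonneg.2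
    (Real.log_nonpos (marginal_nonneg hμ.nonneg j) (hμ.marginal_le_one j)))

theorem IsEntropicallyIndependent.sum_compl_specificCorrelation_le_negMulLog {α : ℝ}
    (hα : α ≠ 0) (hEI : IsEntropicallyIndependent α μ k) (hμ : IsSubsetDistribution μ k)
    (hk : 0 < k) (T : Finset ι) :
    ∑ j ∈ Tᶜ, inclusionProb μ (insert j T) *
        (specificCorrelation μ (insert j T) - specificCorrelation μ T) ≤
      1 / α * Real.negMulLog (inclusionProb μ T) := by
  rcases (inclusionProb_nonneg hμ.nonneg T).eq_or_lt with hT | hT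
  · have hzero (j : ι) : inclusionProb μ (insert j T) = 0 :=
      (hT ▸ inclusionProb_anti hμ.nonneg (subset_insert j T)).antisymm
        (inclusionProb_nonneg hμ.nonneg _)
    simp [hzero, ← hT]
  refine (hμ.sum_compl_specificCorrelation_le_sum T).trans ?_
  have hkl := hEI (conditionOn μ T) (isSubsetDistribution_conditionOn hμ hT.ne')
    fun S hS => by simp [conditionOn, hS]
  rw [klSum_marginal_conditionOn hμ.nonneg hk.ne' hT.ne', klSum_conditionOn hμ hT.ne',
    inv_mul_le_iff₀ (by positivity)] at hkl
  refine hkl.trans_eq ?_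
  rw [Real.negMulLog]
  field_simp

theorem IsEntropicallyIndependent.sum_down_specificCorrelation_succ_sub_le {α : ℝ} (hα : 0 < α)
    (hEI : IsEntropicallyIndependent α μ k) (hμ : IsSubsetDistribution μ k)
    (hi : 2 * (i + 1) ≤ k) :
    ∑ U with #U = i + 1, down μ k (i + 1) U * specificCorrelation μ U -
        ∑ T with #T = i, down μ k i T * specificCorrelation μ T ≤
      i / (k - i) * (1 / α * Real.log (2 * Fintype.card ι / k)) := by
  have hk : 0 < k := by lia
  have hik : i < k := by lia
  have hki : (0 : ℝ) < k - i := sub_pos.2 (by exact_mod_cast hik)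
  refine le_of_mul_le_mul_left ?_ hki
  calc _ = (k.choose i : ℝ)⁻¹ * ∑ T with #T = i, ∑ j ∈ Tᶜ, inclusionProb μ (insert j T) *
        (specificCorrelation μ (insert j T) - specificCorrelation μ T) :=
        sum_down_succ_sub hμ.card_eq hik _
    _ ≤ (k.choose i : ℝ)⁻¹ * ∑ T with #T = i, 1 / α * Real.negMulLog (inclusionProb μ T) := by
        gcongr with T
        exact hEI.sum_compl_specificCorrelation_le_negMulLog hα.ne' hμ hk T
    _ = 1 / α * ((k.choose i : ℝ)⁻¹ * ∑ T with #T = i, Real.negMulLog (inclusionProb μ T)) := by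
        rw [← mul_sum, mul_left_comm]
    _ ≤ 1 / α * (i * Real.log (2 * Fintype.card ι / k)) :=
        mul_le_mul_of_nonneg_left (hμ.sum_negMulLog_inclusionProb_le hk (by lia)) (by positivity)
    _ = (k - i) * (i / (k - i) * (1 / α * Real.log (2 * Fintype.card ι / k))) := by
        field_simp

end SpecificCorrelation

section DownVsIidProposal

theorem log_down_div_iidProposal (hμ : ∀ S, 0 ≤ μ S) (hk : k ≠ 0) {S : Finset ι}
    (hcard : #S ≤ k) (hS : 0 < inclusionProb μ S) :
    Real.log (down μ k #S S / iidProposal (marginal μ) k #S S) =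
      specificCorrelation μ S + (#S * Real.log k - Real.log (k.descFactorial #S)) := by
  have hk' : (k : ℝ) ≠ 0 := by exact_mod_cast hk
  have hC : (k.choose #S : ℝ) ≠ 0 := by exact_mod_cast (Nat.choose_pos hcard).ne'
  have hfact : ((#S).factorial : ℝ) ≠ 0 := by positivity
  have hp : ∀ i ∈ S, marginal μ i ≠ 0 := fun i hi =>
    (hS.trans_le (inclusionProb_le_marginal hμ hi)).ne'
  have hdiv : ∀ i ∈ S, marginal μ i / k ≠ 0 := fun i hi => div_ne_zero (hp i hi) hk'
  have hprod : Real.log (∏ i ∈ S, marginal μ i / k) =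
      ∑ i ∈ S, Real.log (marginal μ i) - #S * Real.log k := by
    rw [Real.log_prod hdiv, sum_congr rfl fun i hi => Real.log_div (hp i hi) hk',
      sum_sub_distrib, sum_const, nsmul_eq_mul]
  rw [down, iidProposal, Real.log_div (by positivity) (mul_ne_zero hfact (prod_ne_zero_iff.2 hdiv)),
    Real.log_mul hfact (prod_ne_zero_iff.2 hdiv), hprod, Real.log_mul (inv_ne_zero hC) hS.ne',
    Real.log_inv, Nat.descFactorial_eq_factorial_mul_choose, Nat.cast_mul, Real.log_mul hfact hC,
    specificCorrelation]
  ring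

theorem IsSubsetDistribution.klSum_down_iidProposal (hμ : IsSubsetDistribution μ k) (hk : k ≠ 0)
    (hi : i ≤ k) :
    klSum {S | #S = i} (down μ k i) (iidProposal (marginal μ) k i) =
      ∑ S with #S = i, down μ k i S * specificCorrelation μ S +
        (i * Real.log k - Real.log (k.descFactorial i)) := by
  have hterm : ∀ S ∈ ({S | #S = i} : Finset (Finset ι)),
      down μ k i S * Real.log (down μ k i S / iidProposal (marginal μ) k i S) =
        down μ k i S * specificCorrelation μ S +
          down μ k i S * (i * Real.log k - Real.log (k.descFactorial i)) := by
    intro S hS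
    obtain rfl : #S = i := (mem_filter.1 hS).2
    rcases (inclusionProb_nonneg hμ.nonneg S).eq_or_lt with h | h
    · simp [down, ← h]
    · rw [log_down_div_iidProposal hμ.nonneg hk hi h, mul_add]
  rw [klSum, sum_congr rfl hterm, sum_add_distrib, ← sum_mul, hμ.sum_down hi, one_mul]

theorem IsEntropicallyIndependent.klSum_down_iidProposal_succ_sub_le {α : ℝ} (hα : 0 < α)
    (hEI : IsEntropicallyIndependent α μ k) (hμ : IsSubsetDistribution μ k)
    (hi : 2 * (i + 1) ≤ k) :
    klSum {S | #S = i + 1} (down μ k (i + 1)) (iidProposal (marginal μ) k (i + 1)) -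
        klSum {S | #S = i} (down μ k i) (iidProposal (marginal μ) k i) ≤
      i / (k - i) * (1 / α * Real.log (2 * Fintype.card ι / k) + 1) := by
  have hk : 0 < k := by lia
  have hik : i < k := by lia
  have hcorr := hEI.sum_down_specificCorrelation_succ_sub_le hα hμ hi
  have hlog : Real.log k - Real.log (k - i) ≤ i / (k - i) :=
    log_sub_log_sub_le (by exact_mod_cast hk) (by exact_mod_cast hik)
  rw [hμ.klSum_down_iidProposal hk.ne' hik, hμ.klSum_down_iidProposal hk.ne' hik.le,
    log_descFactorial_succ hik]
  push_cast
  linarith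

theorem kl_bound_down_vs_iid_proposal_general {α : ℝ} (hα : 0 < α)
    (hμ : IsSubsetDistribution μ k) (hEI : IsEntropicallyIndependent α μ k)
    (hk : 0 < k) {ℓ : ℕ} (hℓ : 2 * ℓ ≤ k) :
    klSum {S | #S = ℓ} (down μ k ℓ) (iidProposal (marginal μ) k ℓ) ≤
      ℓ ^ 2 / k * (1 / α * Real.log (2 * Fintype.card ι / k) + 1) := by
  have hk' : (0 : ℝ) < k := by exact_mod_cast hk
  have hcard : (k : ℝ) ≤ Fintype.card ι := by exact_mod_cast hμ.le_card
  have hlog : 0 ≤ Real.log (2 * Fintype.card ι / k) :=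
    Real.log_nonneg ((one_le_div₀ hk').2 (by linarith))
  refine le_sq_div_mul_of_sub_le
    (a := fun i => klSum {S | #S = i} (down μ k i) (iidProposal (marginal μ) k i))
    (by positivity) ?_ (fun i hi => hEI.klSum_down_iidProposal_succ_sub_le hα hμ hi) hℓ
  simp [klSum, down, iidProposal, filter_eq', inclusionProb_empty, hμ.sum_eq_one]

end DownVsIidProposal

/-- KL divergence between the downed distribution `μ_ℓ = μ D_{k→ℓ}` of
an entropically independent distribution and the i.i.d. proposal
`μ'_ℓ(S) = ℓ!·∏_{i∈S}(p_i/k)`: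
`DKL(μ_ℓ‖μ'_ℓ) ≤ (ℓ²/k)·((1/α)·log(2n/k) + 1)`. -/
theorem kl_bound_down_vs_iid_proposal (n k : ℕ) (hk : 0 < k) (hkn : k ≤ n)
    (α : ℝ) (hα : α ∈ Set.Ioc (0 : ℝ) 1)
    (μ : Finset (Fin n) → ℝ)
    (hnn : ∀ S, 0 ≤ μ S) (hsupp : ∀ S, μ S ≠ 0 → S.card = k)
    (hsum : ∑ S, μ S = 1)
    -- μ is (1/α)-entropically independent
    (hEI : ∀ ν : Finset (Fin n) → ℝ, (∀ S, 0 ≤ ν S) → (∀ S, ν S ≠ 0 → S.card = k) →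
      (∑ S, ν S = 1) → (∀ S, μ S = 0 → ν S = 0) →
      ∑ i : Fin n,
          ((∑ S ∈ univ.filter (fun S : Finset (Fin n) => i ∈ S), ν S) / k) *
            Real.log (((∑ S ∈ univ.filter (fun S : Finset (Fin n) => i ∈ S), ν S) / k) /
              ((∑ S ∈ univ.filter (fun S : Finset (Fin n) => i ∈ S), μ S) / k)) ≤
        1 / (α * k) * ∑ S, ν S * Real.log (ν S / μ S))
    (p : Fin n → ℝ)
    (hp : ∀ i, p i = ∑ S ∈ univ.filter (fun S : Finset (Fin n) => i ∈ S), μ S)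
    (ℓ : ℕ) (hℓ1 : 1 ≤ ℓ) (hℓ2 : 2 * ℓ ≤ k) :
    ∑ S ∈ univ.filter (fun S : Finset (Fin n) => S.card = ℓ),
        ((k.choose ℓ : ℝ))⁻¹ * (∑ T ∈ univ.filter (fun T : Finset (Fin n) => S ⊆ T), μ T) *
          Real.log ((((k.choose ℓ : ℝ))⁻¹ *
              (∑ T ∈ univ.filter (fun T : Finset (Fin n) => S ⊆ T), μ T)) /
            ((ℓ.factorial : ℝ) * ∏ i ∈ S, p i / k)) ≤
      (ℓ : ℝ) ^ 2 / k * (1 / α * Real.log (2 * n / k) + 1) := by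
  obtain rfl : p = marginal μ := funext hp
  have hmain := kl_bound_down_vs_iid_proposal_general hα.1 ⟨hnn, hsupp, hsum⟩
    (fun ν hν => hEI ν hν.nonneg hν.card_eq hν.sum_eq_one) hk hℓ2
  rwa [Fintype.card_fin] at hmain
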